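/- (Harmonic measure lower bound on the slit) Let r ∈ (0,1), let I₀ ⊆ ℝ be an interval with 0 < |I₀| ≤ 1, and Σ = {x + iy : |y| < r} \ I₀. If t ∈ Σ ∩ ℝ satisfies d(t, I₀) ≤ 1, then the harmonic measure of each side I_± of the slit satisfies μ_t^Σ(I_±) ≥ (|I₀|/8) e^{−2/r}. -/

import Mathlib

open MeasureTheory Set Filter

/-- A continuous function is harmonic on an open set `U ⊆ ℂ` if it satisfies the
mean value property on all sufficiently small circles around each point of `U`. -/
def HarmonicOnSet (u : ℂ → ℝ) (U : Set ℂ) : Prop :=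
  ContinuousOn u U ∧
  ∀ z ∈ U, ∀ᶠ ρ in nhdsWithin (0 : ℝ) (Set.Ioi (0 : ℝ)),
    u z = (2 * Real.pi)⁻¹ *
      ∫ θ in (0 : ℝ)..(2 * Real.pi), u (z + (Complex.ofReal ρ) * Complex.exp ((θ : ℂ) * Complex.I))

open scoped Topology

theorem HarmonicOnSet.mono {u : ℂ → ℝ} {U V : Set ℂ} (hu : HarmonicOnSet u U) (hVU : V ⊆ U) :
    HarmonicOnSet u V :=
  ⟨hu.1.mono hVU, fun z hz => hu.2 z (hVU hz)⟩

/-- Small closed discs around a point of an open set stay inside the set. -/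
theorem IsOpen.eventually_closedBall_subset {U : Set ℂ} (hU : IsOpen U) {z : ℂ} (hz : z ∈ U) :
    ∀ᶠ ρ in 𝓝[>] (0 : ℝ), 0 < ρ ∧ Metric.closedBall z ρ ⊆ U := by
  obtain ⟨ε, hε, hball⟩ := Metric.isOpen_iff.1 hU z hz
  filter_upwards [Ioo_mem_nhdsGT hε] with ρ hρ
  exact ⟨hρ.1, (Metric.closedBall_subset_ball hρ.2).trans hball⟩

theorem circle_point_mem_closedBall (z : ℂ) {ρ : ℝ} (hρ : 0 < ρ) (θ : ℝ) :
    z + (ρ : ℂ) * Complex.exp ((θ : ℂ) * Complex.I) ∈ Metric.closedBall z ρ := by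
  simp [Complex.norm_exp_ofReal_mul_I, abs_of_pos hρ]

theorem ContinuousOn.continuous_circle {u : ℂ → ℝ} {U : Set ℂ} (hu : ContinuousOn u U) {z : ℂ}
    {ρ : ℝ} (hρ : 0 < ρ) (hball : Metric.closedBall z ρ ⊆ U) :
    Continuous fun θ : ℝ => u (z + (ρ : ℂ) * Complex.exp ((θ : ℂ) * Complex.I)) :=
  hu.comp_continuous (by fun_prop) fun θ => hball (circle_point_mem_closedBall z hρ θ)

theorem HarmonicOnSet.sub {u v : ℂ → ℝ} {U : Set ℂ} (hU : IsOpen U) (hu : HarmonicOnSet u U)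
    (hv : HarmonicOnSet v U) : HarmonicOnSet (fun z => u z - v z) U := by
  refine ⟨hu.1.sub hv.1, fun z hz => ?_⟩
  filter_upwards [hu.2 z hz, hv.2 z hz, hU.eventually_closedBall_subset hz] with ρ h₁ h₂ h₃
  rw [intervalIntegral.integral_sub
    ((hu.1.continuous_circle h₃.1 h₃.2).intervalIntegrable _ _)
    ((hv.1.continuous_circle h₃.1 h₃.2).intervalIntegrable _ _), mul_sub, ← h₁, ← h₂]

/-- The imaginary part of a holomorphic function is harmonic. -/
theorem DifferentiableOn.harmonicOnSet_im {F : ℂ → ℂ} {U : Set ℂ} (hU : IsOpen U)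
    (hF : DifferentiableOn ℂ F U) : HarmonicOnSet (fun z => (F z).im) U := by
  refine ⟨Complex.continuous_im.comp_continuousOn hF.continuousOn, fun z hz => ?_⟩
  filter_upwards [hU.eventually_closedBall_subset hz] with ρ hρ
  have hmean := InnerProductSpace.HarmonicOnNhd.circleAverage_eq (f := fun z => (F z).im) (c := z)
    (R := ρ) fun w hw => by
      rw [abs_of_pos hρ.1] at hw
      exact (hF.analyticAt (hU.mem_nhds (hρ.2 hw))).harmonicAt_im
  rw [← hmean, Real.circleAverage_def]
  rfl

/-- **Minimum principle**: a harmonic function all of whose negative sublevel sets are compact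
is nonnegative. -/
theorem HarmonicOnSet.nonneg_of_isCompact_sublevel {f : ℂ → ℝ} {U : Set ℂ} (hU : IsOpen U)
    (hf : HarmonicOnSet f U) (hcomp : ∀ δ : ℝ, 0 < δ → IsCompact {z ∈ U | f z ≤ -δ}) :
    ∀ z ∈ U, 0 ≤ f z := by
  intro z₁ hz₁
  by_contra! hneg
  have hC := hcomp (-f z₁) (by linarith)
  simp only [neg_neg] at hC
  have hCU : {z ∈ U | f z ≤ f z₁} ⊆ U := fun z hz => hz.1
  obtain ⟨z₂, hz₂, hmin⟩ := hC.exists_isMinOn ⟨z₁, hz₁, le_rfl⟩ (hf.1.mono hCU)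
  have hminU : ∀ z ∈ U, f z₂ ≤ f z := fun z hz => by
    by_cases h : f z ≤ f z₁
    · exact hmin ⟨hz, h⟩
    · exact hz₂.2.trans (not_le.1 h).le
  have hM : IsCompact ({z ∈ U | f z ≤ f z₁} ∩ f ⁻¹' {f z₂}) :=
    hC.of_isClosed_subset
      ((hf.1.mono hCU).preimage_isClosed_of_isClosed hC.isClosed isClosed_singleton)
      inter_subset_left
  obtain ⟨z₀, ⟨hz₀, hz₀f⟩, hmax⟩ := hM.exists_isMaxOn ⟨z₂, hz₂, rfl⟩
    Complex.continuous_re.continuousOn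
  have hz₀f : f z₀ = f z₂ := hz₀f
  obtain ⟨ρ, hmean, hρ, hball⟩ :=
    ((hf.2 z₀ hz₀.1).and (hU.eventually_closedBall_subset hz₀.1)).exists
  have hright : z₀ + ρ ∈ U := by
    simpa using hball (circle_point_mem_closedBall z₀ hρ 0)
  have hlt : f z₂ < f (z₀ + ρ) := by
    refine lt_of_le_of_ne (hminU _ hright) fun h => ?_
    have := hmax (a := z₀ + ρ) ⟨⟨hright, h ▸ hz₂.2⟩, h.symm⟩
    simp at this
    linarith
  have hint := intervalIntegral.integral_lt_integral_of_continuousOn_of_le_of_exists_lt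
    Real.two_pi_pos (continuousOn_const (c := f z₂))
    (hf.1.continuous_circle hρ hball).continuousOn
    (fun θ _ => hminU _ (hball (circle_point_mem_closedBall z₀ hρ θ)))
    ⟨0, ⟨le_rfl, Real.two_pi_pos.le⟩, by simpa using hlt⟩
  rw [intervalIntegral.integral_const, smul_eq_mul, sub_zero] at hint
  rw [hz₀f, inv_mul_eq_div, eq_div_iff Real.two_pi_pos.ne'] at hmean
  linarith

/-- For `w` in the upper half-plane and `α < β`, the cross ratio `(w - β) / (w - α)`, whose
argument is the angle under which `[α, β]` is seen from `w`, lies in the upper half-plane. -/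
theorem im_div_sub_sub_pos {α β : ℝ} (hαβ : α < β) {w : ℂ} (hw : 0 < w.im) :
    0 < ((w - β) / (w - α)).im := by
  have hne : w - α ≠ 0 := fun h => by
    have := congrArg Complex.im h
    simp at this
    linarith
  have hn := Complex.normSq_pos.2 hne
  have : ((w - β) / (w - α)).im = (β - α) * w.im / Complex.normSq (w - α) := by
    rw [Complex.div_im]
    simp
    ring
  rw [this]
  exact div_pos (mul_pos (by linarith) hw) hn

theorem tendsto_arg_div_sub_sub_of_notMem {α β : ℝ} (hαβ : α < β) {x : ℝ} (hx : x ∉ Icc α β) :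
    Tendsto (fun w : ℂ => ((w - β) / (w - α)).arg) (𝓝 (x : ℂ)) (𝓝 0) := by
  have hpos : 0 < (x - β) / (x - α) := by
    rcases lt_or_ge x α with h | h
    · exact div_pos_of_neg_of_neg (by linarith) (by linarith)
    · have : β < x := lt_of_not_ge fun h' => hx ⟨h, h'⟩
      exact div_pos (by linarith) (by linarith)
  have hne : (x : ℂ) - α ≠ 0 := by
    intro h
    rw [← Complex.ofReal_sub, Complex.ofReal_eq_zero] at h
    rw [h, div_zero] at hpos
    exact hpos.false
  have hval : ((x : ℂ) - β) / (x - α) = (((x - β) / (x - α) : ℝ) : ℂ) := by push_cast; rfl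
  have hq : ContinuousAt (fun w : ℂ => (w - β) / (w - α)) x :=
    ContinuousAt.div (by fun_prop) (by fun_prop) hne
  have harg : ContinuousAt (fun w : ℂ => ((w - β) / (w - α)).arg) x :=
    ContinuousAt.comp (f := fun w : ℂ => (w - β) / (w - α)) (g := Complex.arg)
      (Complex.continuousAt_arg (by rw [hval]; exact Complex.ofReal_mem_slitPlane.2 hpos)) hq
  have := harg.tendsto
  rwa [hval, Complex.arg_ofReal_of_nonneg hpos.le] at this

theorem tendsto_arg_div_sub_sub_cobounded (α β : ℝ) :
    Tendsto (fun w : ℂ => ((w - β) / (w - α)).arg) (Bornology.cobounded ℂ) (𝓝 0) := by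
  have hsub : Tendsto (fun w : ℂ => w - α) (Bornology.cobounded ℂ) (Bornology.cobounded ℂ) := by
    simpa only [sub_eq_add_neg] using tendsto_add_const_cobounded (-(α : ℂ))
  have hinv := tendsto_inv₀_cobounded.comp hsub
  have hq : Tendsto (fun w : ℂ => 1 + (α - β) * (w - α)⁻¹) (Bornology.cobounded ℂ) (𝓝 1) := by
    simpa using (hinv.const_mul ((α : ℂ) - β)).const_add 1
  have hq' : Tendsto (fun w : ℂ => (w - β) / (w - α)) (Bornology.cobounded ℂ) (𝓝 1) := by
    refine hq.congr' ?_
    filter_upwards [Bornology.eventually_ne_cobounded (α : ℂ)] with w hw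
    have : w - α ≠ 0 := sub_ne_zero.2 hw
    field_simp
    ring
  simpa [Function.comp_def] using (Complex.continuousAt_arg (x := 1) (by simp)).tendsto.comp hq'

/-- Comparison with the harmonic measure of `[α, β]` in the upper half-plane, transported by a
conformal equivalence `ψ : U → ℍ` with inverse `φ`. -/
theorem HarmonicOnSet.arg_div_pi_le {u : ℂ → ℝ} {U : Set ℂ} (hU : IsOpen U)
    (hu : HarmonicOnSet u U) (hnonneg : ∀ z ∈ U, 0 ≤ u z) {φ ψ : ℂ → ℂ}
    (hψ : DifferentiableOn ℂ ψ U) (hψmem : ∀ z ∈ U, 0 < (ψ z).im)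
    (hφ : ContinuousOn φ {w | 0 < w.im}) (hφmem : ∀ w : ℂ, 0 < w.im → φ w ∈ U)
    (hφψ : ∀ z ∈ U, φ (ψ z) = z) (hψφ : ∀ w : ℂ, 0 < w.im → ψ (φ w) = w)
    {α β : ℝ} (hαβ : α < β)
    (hlim : ∀ x ∈ Icc α β, Tendsto (fun w => u (φ w)) (𝓝[{w | 0 < w.im}] (x : ℂ)) (𝓝 1)) :
    ∀ z ∈ U, ((ψ z - β) / (ψ z - α)).arg / Real.pi ≤ u z := by
  have hslit : ∀ w : ℂ, 0 < w.im → (w - β) / (w - α) ∈ Complex.slitPlane := fun w hw =>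
    Or.inr (im_div_sub_sub_pos hαβ hw).ne'
  have hden : ∀ w : ℂ, 0 < w.im → w - α ≠ 0 := fun w hw h => by
    have := congrArg Complex.im h
    simp at this
    linarith
  have hangle : HarmonicOnSet (fun z => ((ψ z - β) / (ψ z - α)).arg / Real.pi) U := by
    have hF : DifferentiableOn ℂ (fun z => Complex.log ((ψ z - β) / (ψ z - α)) / Real.pi) U :=
      (((hψ.sub_const _).div (hψ.sub_const _) fun z hz => hden _ (hψmem z hz)).clog
        fun z hz => hslit _ (hψmem z hz)).div_const _
    have hFim := hF.harmonicOnSet_im hU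
    simpa only [Complex.div_ofReal_im, Complex.log_im] using hFim
  have hmain := (hu.sub hU hangle).nonneg_of_isCompact_sublevel hU ?_
  · intro z hz
    have := hmain z hz
    linarith
  intro δ hδ
  set g : ℂ → ℝ := fun w => u (φ w) - ((w - β) / (w - α)).arg / Real.pi with hg
  have hgcont : ContinuousOn g {w | 0 < w.im} := by
    refine (hu.1.comp hφ hφmem).sub (ContinuousOn.div_const ?_ _)
    intro w hw
    refine ContinuousAt.continuousWithinAt ?_
    exact ContinuousAt.comp (f := fun w : ℂ => (w - β) / (w - α)) (g := Complex.arg)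
      (Complex.continuousAt_arg (hslit w hw))
      (ContinuousAt.div (by fun_prop) (by fun_prop) (hden w hw))
  have himage : {z ∈ U | u z - ((ψ z - β) / (ψ z - α)).arg / Real.pi ≤ -δ} =
      φ '' {w | 0 < w.im ∧ g w ≤ -δ} := by
    ext z
    constructor
    · rintro ⟨hz, hle⟩
      exact ⟨ψ z, ⟨hψmem z hz, by simpa only [hg, hφψ z hz] using hle⟩, hφψ z hz⟩
    · rintro ⟨w, ⟨hw, hle⟩, rfl⟩
      exact ⟨hφmem w hw, by simpa only [hg, hψφ w hw] using hle⟩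
  rw [himage]
  refine IsCompact.image_of_continuousOn ?_ (hφ.mono fun w hw => hw.1)
  have hangle_large : ∀ w : ℂ, 0 < w.im → g w ≤ -δ →
      δ * Real.pi ≤ ((w - β) / (w - α)).arg := fun w hw hle => by
    have := hnonneg _ (hφmem w hw)
    rw [← le_div_iff₀ Real.pi_pos]
    simp only [hg] at hle
    linarith
  have hδπ : 0 < δ * Real.pi := mul_pos hδ Real.pi_pos
  refine Metric.isCompact_of_isClosed_isBounded ?_ ?_
  · rw [isClosed_iff_frequently]
    intro w hfreq
    have him : 0 ≤ w.im := by
      have hcl : w ∈ closure {w : ℂ | 0 ≤ w.im} :=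
        mem_closure_iff_frequently.2 (hfreq.mono fun w hw => hw.1.le)
      rwa [(isClosed_le continuous_const Complex.continuous_im).closure_eq] at hcl
    have hfreq' : ∃ᶠ w in 𝓝[{w : ℂ | 0 < w.im}] w, g w ≤ -δ := by
      rw [frequently_nhdsWithin_iff]
      exact hfreq.mono fun w hw => ⟨hw.2, hw.1⟩
    rcases him.lt_or_eq with hpos | hzero
    · exact ⟨hpos, le_of_tendsto_of_frequently (hgcont w hpos) hfreq'⟩
    · exfalso
      obtain ⟨x, rfl⟩ : ∃ x : ℝ, w = x := ⟨w.re, Complex.ext rfl (by simp [← hzero])⟩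
      by_cases hx : x ∈ Icc α β
      · have hev : ∀ᶠ w in 𝓝[{w : ℂ | 0 < w.im}] (x : ℂ), -δ < g w := by
          filter_upwards [(hlim x hx).eventually (lt_mem_nhds (show 1 - δ < 1 by linarith))]
            with w hw
          have : ((w - β) / (w - α)).arg / Real.pi ≤ 1 :=
            div_le_one_of_le₀ (Complex.arg_le_pi _) Real.pi_pos.le
          simp only [hg]
          linarith
        obtain ⟨w, h₁, h₂⟩ := (hfreq'.and_eventually hev).exists
        linarith
      · have hev := (tendsto_arg_div_sub_sub_of_notMem hαβ hx).eventually (gt_mem_nhds hδπ)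
        obtain ⟨w, h₁, h₂⟩ := (hfreq.and_eventually hev).exists
        linarith [hangle_large w h₁.1 h₁.2]
  · have hev := (tendsto_arg_div_sub_sub_cobounded α β).eventually (gt_mem_nhds hδπ)
    rw [← Bornology.isCobounded_compl_iff, Bornology.isCobounded_def]
    filter_upwards [hev] with w hw hmem
    linarith [hangle_large w hmem.1 hmem.2]

theorem Complex.arg_eq_arctan_of_re_pos {z : ℂ} (hz : 0 < z.re) :
    z.arg = Real.arctan (z.im / z.re) := by
  have h := abs_lt.1 (Complex.abs_arg_lt_pi_div_two_iff.2 (Or.inl hz))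
  rw [← Complex.tan_arg, Real.arctan_tan h.1 h.2]

/-- Up to the affine change of variables `z ↦ κ (z - c)`, the strip `|Im z| < π` slit along
`(-∞, 0]`. -/
def slitStrip (κ c : ℝ) : Set ℂ :=
  {z | |κ * z.im| < Real.pi ∧ Complex.exp (κ * (z - c)) - 1 ∈ Complex.slitPlane}

theorem isOpen_slitStrip (κ c : ℝ) : IsOpen (slitStrip κ c) :=
  (isOpen_lt (f := fun z : ℂ => |κ * z.im|) (by fun_prop) continuous_const).inter
    (Complex.isOpen_slitPlane.preimage (f := fun z : ℂ => Complex.exp (κ * (z - c)) - 1)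
      (by fun_prop))

theorem ofReal_mem_slitStrip_iff {κ c x : ℝ} : (x : ℂ) ∈ slitStrip κ c ↔ 0 < κ * (x - c) := by
  have : Complex.exp (κ * (x - c)) - 1 = ((Real.exp (κ * (x - c)) - 1 : ℝ) : ℂ) := by
    push_cast; rfl
  simp only [slitStrip, mem_ofPred_eq, this, Complex.ofReal_mem_slitPlane]
  simp [Real.pi_pos]

/-- The conformal map of the slit strip onto the upper half-plane. -/
noncomputable def slitStripMap (κ c : ℝ) (z : ℂ) : ℂ :=
  Complex.I * (Complex.exp (κ * (z - c)) - 1) ^ (2⁻¹ : ℂ)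

/-- The conformal map of the upper half-plane onto the slit strip. -/
noncomputable def slitStripMapInv (κ c : ℝ) (w : ℂ) : ℂ :=
  c + Complex.log (1 - w ^ 2) / κ

theorem differentiableOn_slitStripMap (κ c : ℝ) :
    DifferentiableOn ℂ (slitStripMap κ c) (slitStrip κ c) := by
  refine DifferentiableOn.const_mul (DifferentiableOn.cpow ?_ ?_ ?_) _
  · fun_prop
  · fun_prop
  · exact fun z hz => hz.2

theorem slitStripMap_im_pos {κ c : ℝ} {z : ℂ} (hz : z ∈ slitStrip κ c) :
    0 < (slitStripMap κ c z).im := by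
  rw [slitStripMap, Complex.I_mul_im, Complex.cpow_inv_two_re]
  refine Real.sqrt_pos.2 (half_pos ?_)
  set q := Complex.exp (κ * (z - c)) - 1
  have hq : q ∈ Complex.slitPlane := hz.2
  have hle := neg_le_of_abs_le (Complex.abs_re_le_norm q)
  refine lt_of_le_of_ne (by linarith) fun h => ?_
  have hre : q.re = -‖q‖ := by linarith
  have him : q.im = 0 := by
    have h2 := Complex.sq_norm q
    rw [Complex.normSq_apply, hre] at h2
    nlinarith
  rcases hq with h' | h'
  · linarith [norm_nonneg q]
  · exact h' him

theorem neg_sq_mem_slitPlane {w : ℂ} (hw : 0 < w.im) : -w ^ 2 ∈ Complex.slitPlane := by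
  by_cases hre : w.re = 0
  · left
    simp [sq, hre]
    positivity
  · right
    simp only [Complex.neg_im, sq, Complex.mul_im]
    intro h
    have : w.re * w.im = 0 := by linarith
    rcases mul_eq_zero.1 this with h | h
    · exact hre h
    · exact hw.ne' h

theorem one_sub_sq_mem_slitPlane {w : ℂ} (hw : 0 < w.im) : 1 - w ^ 2 ∈ Complex.slitPlane := by
  rcases neg_sq_mem_slitPlane hw with h | h
  · left
    simp only [Complex.neg_re, Complex.sub_re, Complex.one_re] at h ⊢
    linarith
  · right
    simpa using h

theorem continuousAt_slitStripMapInv (κ c : ℝ) {w : ℂ} (hw : 1 - w ^ 2 ∈ Complex.slitPlane) :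
    ContinuousAt (slitStripMapInv κ c) w :=
  continuousAt_const.add ((ContinuousAt.clog (f := fun w : ℂ => 1 - w ^ 2) (by fun_prop) hw).div_const _)

theorem exp_slitStripMapInv {κ : ℝ} (hκ : κ ≠ 0) (c : ℝ) {w : ℂ} (hw : 0 < w.im) :
    Complex.exp (κ * (slitStripMapInv κ c w - c)) - 1 = -w ^ 2 := by
  have hκ' : (κ : ℂ) ≠ 0 := Complex.ofReal_ne_zero.2 hκ
  rw [slitStripMapInv, add_sub_cancel_left, mul_div_cancel₀ _ hκ',
    Complex.exp_log (Complex.slitPlane_ne_zero (one_sub_sq_mem_slitPlane hw))]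
  ring

theorem slitStripMapInv_im (κ c : ℝ) (w : ℂ) :
    (slitStripMapInv κ c w).im = (1 - w ^ 2).arg / κ := by
  simp [slitStripMapInv, Complex.div_ofReal_im, Complex.log_im]

theorem slitStripMapInv_mem {κ : ℝ} (hκ : κ ≠ 0) (c : ℝ) {w : ℂ} (hw : 0 < w.im) :
    slitStripMapInv κ c w ∈ slitStrip κ c := by
  refine ⟨?_, ?_⟩
  · rw [slitStripMapInv_im, mul_div_cancel₀ _ hκ]
    exact abs_lt.2 ⟨Complex.neg_pi_lt_arg _, lt_of_le_of_ne (Complex.arg_le_pi _)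
      (Complex.mem_slitPlane_iff_arg.1 (one_sub_sq_mem_slitPlane hw)).1⟩
  · rw [exp_slitStripMapInv hκ c hw]
    exact neg_sq_mem_slitPlane hw

theorem slitStripMap_slitStripMapInv {κ : ℝ} (hκ : κ ≠ 0) (c : ℝ) {w : ℂ} (hw : 0 < w.im) :
    slitStripMap κ c (slitStripMapInv κ c w) = w := by
  have hsq : -w ^ 2 = (-Complex.I * w) ^ 2 := by
    rw [mul_pow, neg_sq, Complex.I_sq, neg_one_mul]
  rw [slitStripMap, exp_slitStripMapInv hκ c hw, hsq, Complex.sq_cpow_two_inv (by simpa using hw),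
    ← mul_assoc, mul_neg, Complex.I_mul_I, neg_neg, one_mul]

theorem slitStripMapInv_slitStripMap {κ : ℝ} (hκ : κ ≠ 0) {c : ℝ} {z : ℂ}
    (hz : z ∈ slitStrip κ c) : slitStripMapInv κ c (slitStripMap κ c z) = z := by
  have hκ' : (κ : ℂ) ≠ 0 := Complex.ofReal_ne_zero.2 hκ
  have hsq : 1 - slitStripMap κ c z ^ 2 = Complex.exp (κ * (z - c)) := by
    rw [slitStripMap, mul_pow, Complex.I_sq, Complex.cpow_ofNat_inv_pow]
    ring
  have him : (κ * (z - c)).im = κ * z.im := by simp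
  have h := abs_lt.1 hz.1
  rw [slitStripMapInv, hsq, Complex.log_exp (by rw [him]; exact h.1) (by rw [him]; exact h.2.le),
    mul_div_cancel_left₀ _ hκ']
  ring

theorem slitStripMap_ofReal {κ c t : ℝ} (ht : 0 < κ * (t - c)) :
    slitStripMap κ c t = Complex.I * (√(Real.exp (κ * (t - c)) - 1) : ℝ) := by
  have hpos : 0 ≤ Real.exp (κ * (t - c)) - 1 := by linarith [Real.one_le_exp ht.le]
  have : Complex.exp (κ * (t - c)) - 1 = ((Real.exp (κ * (t - c)) - 1 : ℝ) : ℂ) := by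
    push_cast; rfl
  rw [slitStripMap, this, Real.sqrt_eq_rpow, Complex.ofReal_cpow hpos]
  norm_num

/-- If `u ≥ 0` is harmonic on the slit strip and tends to `1` at one side of the part of the
slit where `-L < κ (y - c) < 0`, then `u` is bounded below on the real axis by the harmonic
measure of that side. -/
theorem HarmonicOnSet.arctan_div_pi_le {u : ℂ → ℝ} {κ c L t σ : ℝ} (hL : 0 < L)
    (hu : HarmonicOnSet u (slitStrip κ c)) (hnonneg : ∀ z ∈ slitStrip κ c, 0 ≤ u z)
    (hκ : κ ≠ 0) (hσ : σ ≠ 0) (ht : 0 < κ * (t - c))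
    (hside : ∀ y : ℝ, κ * (y - c) ∈ Ioo (-L) 0 →
      Tendsto u (𝓝[{z : ℂ | 0 < σ * z.im}] (y : ℂ)) (𝓝 1)) :
    Real.arctan (√(1 - Real.exp (-L)) / √(Real.exp (κ * (t - c)) - 1)) / Real.pi ≤ u t := by
  set s := √(1 - Real.exp (-L))
  set τ := √(Real.exp (κ * (t - c)) - 1)
  have hexpL : Real.exp (-L) < 1 := Real.exp_lt_one_iff.2 (by linarith)
  have hs0 : 0 < s := Real.sqrt_pos.2 (by linarith)
  have hs2 : s ^ 2 = 1 - Real.exp (-L) := Real.sq_sqrt (by linarith)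
  have hτ0 : 0 < τ := Real.sqrt_pos.2 (by linarith [Real.one_lt_exp_iff.2 ht])
  obtain ⟨η, hη, hηsign⟩ : ∃ η : ℝ, (η = 1 ∨ η = -1) ∧ 0 < -(η * (σ / κ)) := by
    rcases lt_or_gt_of_ne (div_ne_zero hσ hκ) with h | h
    · exact ⟨1, Or.inl rfl, by linarith⟩
    · exact ⟨-1, Or.inr rfl, by linarith⟩
  have hη2 : η ^ 2 = 1 := by rcases hη with rfl | rfl <;> norm_num
  have hlim : ∀ x : ℝ, 0 < η * x → η * x < s → Tendsto (fun w => u (slitStripMapInv κ c w))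
      (𝓝[{w | 0 < w.im}] (x : ℂ)) (𝓝 1) := by
    intro x hx0 hxs
    have hx2 : x ^ 2 = (η * x) ^ 2 := by rw [mul_pow, hη2, one_mul]
    have hx2pos : 0 < x ^ 2 := by rw [hx2]; positivity
    have hx2lt : x ^ 2 < 1 - Real.exp (-L) := by rw [hx2, ← hs2]; gcongr
    have hone : 0 < 1 - x ^ 2 := by linarith [Real.exp_pos (-L)]
    have hcast : (1 - (x : ℂ) ^ 2) = ((1 - x ^ 2 : ℝ) : ℂ) := by push_cast; rfl
    have hval : slitStripMapInv κ c x = ((c + Real.log (1 - x ^ 2) / κ : ℝ) : ℂ) := by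
      rw [slitStripMapInv, hcast, ← Complex.ofReal_log hone.le]
      push_cast
      rfl
    have hcont : Tendsto (slitStripMapInv κ c) (𝓝 (x : ℂ))
        (𝓝 ((c + Real.log (1 - x ^ 2) / κ : ℝ) : ℂ)) := by
      rw [← hval]
      exact continuousAt_slitStripMapInv κ c
        (by rw [hcast]; exact Complex.ofReal_mem_slitPlane.2 hone)
    refine (hside (c + Real.log (1 - x ^ 2) / κ) ?_).comp
      (tendsto_nhdsWithin_iff.2 ⟨hcont.mono_left nhdsWithin_le_nhds, ?_⟩)
    · rw [add_sub_cancel_left, mul_div_cancel₀ _ hκ]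
      exact ⟨(Real.lt_log_iff_exp_lt hone).2 (by linarith), Real.log_neg hone (by linarith)⟩
    · have hre : ∀ᶠ w : ℂ in 𝓝[{w | 0 < w.im}] (x : ℂ), 0 < η * w.re :=
        nhdsWithin_le_nhds ((isOpen_lt continuous_const
          (continuous_const.mul Complex.continuous_re)).mem_nhds (by simpa using hx0))
      filter_upwards [hre, self_mem_nhdsWithin] with w hw him
      have him : 0 < w.im := him
      have hprod : 0 < η * (w.re * w.im) := by rw [← mul_assoc]; exact mul_pos hw him
      have hwim : (1 - w ^ 2).im = -2 * (w.re * w.im) := by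
        simp [sq]
        ring
      have harg : η * (1 - w ^ 2).arg < 0 := by
        rcases hη with rfl | rfl
        · rw [one_mul, Complex.arg_neg_iff, hwim]
          linarith
        · have h₀ : 0 ≤ (1 - w ^ 2).arg := Complex.arg_nonneg_iff.2 (by rw [hwim]; linarith)
          have h₁ : (1 - w ^ 2).arg ≠ 0 := fun h => by
            have := (Complex.arg_eq_zero_iff.1 h).2
            rw [hwim] at this
            linarith
          have := lt_of_le_of_ne h₀ h₁.symm
          linarith
      have hkey : σ * ((1 - w ^ 2).arg / κ) = (-(η * (σ / κ))) * (-(η * (1 - w ^ 2).arg)) := by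
        linear_combination (-(σ / κ * (1 - w ^ 2).arg)) * hη2
      rw [slitStripMapInv_im, hkey]
      exact mul_pos hηsign (by linarith)
  set A : ℝ → ℝ := fun p => s * (p + (η - 1) / 2) with hA
  set B : ℝ → ℝ := fun p => s * (-p + (η + 1) / 2) with hB
  have hbound : ∀ p ∈ Ioo (0 : ℝ) (1 / 2),
      ((Complex.I * τ - B p) / (Complex.I * τ - A p)).arg / Real.pi ≤ u t := by
    intro p hp
    have hAB : A p < B p := by
      simp only [hA, hB]
      exact mul_lt_mul_of_pos_left (by linarith [hp.2]) hs0
    have h := hu.arg_div_pi_le (isOpen_slitStrip κ c) hnonneg (differentiableOn_slitStripMap κ c)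
      (fun z hz => slitStripMap_im_pos hz)
      (fun w hw => (continuousAt_slitStripMapInv κ c
        (one_sub_sq_mem_slitPlane hw)).continuousWithinAt)
      (fun w hw => slitStripMapInv_mem hκ c hw) (fun z hz => slitStripMapInv_slitStripMap hκ hz)
      (fun w hw => slitStripMap_slitStripMapInv hκ c hw) hAB
      (fun x hx => by
        have hps : 0 < s * p := mul_pos hs0 hp.1
        have h₁ := hx.1
        have h₂ := hx.2
        simp only [hA, hB] at h₁ h₂
        refine hlim x ?_ ?_ <;> rcases hη with rfl | rfl <;> nlinarith)
      t (ofReal_mem_slitStrip_iff.2 ht)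
    rwa [slitStripMap_ofReal ht] at h
  have hden : Complex.I * (τ : ℂ) - A 0 ≠ 0 := fun h => by
    have := congrArg Complex.im h
    simp at this
    linarith
  have hn := Complex.normSq_pos.2 hden
  have hprod : A 0 * B 0 = 0 := by
    simp only [hA, hB]
    linear_combination s ^ 2 / 4 * hη2
  have hdiff : B 0 - A 0 = s := by
    simp only [hA, hB]
    ring
  have hre : ((Complex.I * τ - B 0) / (Complex.I * τ - A 0)).re =
      τ ^ 2 / Complex.normSq (Complex.I * τ - A 0) := by
    rw [Complex.div_re, ← add_div]
    congr 1
    simp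
    linear_combination hprod
  have him : ((Complex.I * τ - B 0) / (Complex.I * τ - A 0)).im =
      τ * s / Complex.normSq (Complex.I * τ - A 0) := by
    rw [Complex.div_im, ← sub_div]
    congr 1
    simp
    linear_combination τ * hdiff
  have hrepos : 0 < ((Complex.I * τ - B 0) / (Complex.I * τ - A 0)).re := by
    rw [hre]
    positivity
  have harg : ((Complex.I * τ - B 0) / (Complex.I * τ - A 0)).arg = Real.arctan (s / τ) := by
    rw [Complex.arg_eq_arctan_of_re_pos hrepos, hre, him]
    congr 1
    field_simp
  have hq : ContinuousAt (fun p : ℝ => (Complex.I * τ - B p) / (Complex.I * τ - A p)) 0 :=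
    ContinuousAt.div (by fun_prop) (by fun_prop) hden
  have htend : Tendsto
      (fun p : ℝ => ((Complex.I * τ - B p) / (Complex.I * τ - A p)).arg / Real.pi) (𝓝[>] 0)
      (𝓝 (Real.arctan (s / τ) / Real.pi)) := by
    rw [← harg]
    refine Tendsto.div_const ?_ _
    exact ((Complex.continuousAt_arg (Or.inl hrepos)).tendsto.comp hq.tendsto).mono_left
      nhdsWithin_le_nhds
  refine le_of_tendsto htend ?_
  filter_upwards [Ioo_mem_nhdsGT (show (0 : ℝ) < 1 / 2 by norm_num)] with p hp
  exact hbound p hp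

theorem pi_div_four_mul_le_arctan {y : ℝ} (hy0 : 0 ≤ y) (hy : y ≤ 1 / 2) :
    Real.pi / 4 * y ≤ Real.arctan y := by
  set x := Real.arctan y with hx
  have hx0 : 0 ≤ x := Real.arctan_nonneg.2 hy0
  have hxy : x ≤ y := by
    simpa only [hx, Real.tan_arctan] using Real.le_tan hx0 (Real.arctan_lt_pi_div_two y)
  have hcos : 7 / 8 ≤ Real.cos x := by
    have := Real.one_sub_sq_div_two_le_cos (x := x)
    nlinarith
  have htan : y * Real.cos x = Real.sin x := by
    rw [← Real.tan_mul_cos (by linarith : Real.cos x ≠ 0), hx, Real.tan_arctan]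
  have hsin : Real.sin x ≤ x := Real.sin_le hx0
  have := Real.pi_lt_d2
  nlinarith

theorem mul_exp_le_arctan_div_pi {r ℓ d : ℝ} (hr : 0 < r) (hr1 : r < 1) (hℓ : 0 < ℓ)
    (hℓ1 : ℓ ≤ 1) (hd : 0 < d) (hdr : d ≤ Real.pi / r) :
    ℓ / 8 * Real.exp (-2 / r) ≤
      Real.arctan (√(1 - Real.exp (-(Real.pi / r * ℓ))) / √(Real.exp d - 1)) / Real.pi := by
  have hπ := Real.pi_gt_three
  have hπ' := Real.pi_lt_d2
  set e := Real.exp (-2 / r) with he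
  have he0 : 0 < e := Real.exp_pos _
  have he1 : e ≤ 1 := Real.exp_le_one_iff.2 (div_nonpos_of_nonpos_of_nonneg (by norm_num) hr.le)
  have hs : ℓ / 2 ≤ √(1 - Real.exp (-(Real.pi / r * ℓ))) := by
    refine Real.le_sqrt_of_sq_le ?_
    have hle : Real.exp (-(Real.pi / r * ℓ)) ≤ Real.exp (-(3 * ℓ)) := by
      have : 3 ≤ Real.pi / r := (le_div_iff₀ hr).2 (by nlinarith)
      exact Real.exp_le_exp.2 (by nlinarith)
    have hinv : Real.exp (-(3 * ℓ)) * (1 + 3 * ℓ) ≤ 1 := by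
      rw [Real.exp_neg, inv_mul_le_iff₀ (Real.exp_pos _), mul_one]
      linarith [Real.add_one_le_exp (3 * ℓ)]
    have hpos := Real.exp_pos (-(3 * ℓ))
    nlinarith
  have hτpos : 0 < √(Real.exp d - 1) := Real.sqrt_pos.2 (by linarith [Real.one_lt_exp_iff.2 hd])
  have hτ : e * √(Real.exp d - 1) ≤ 1 := by
    have hτle : √(Real.exp d - 1) ≤ Real.exp (2 / r) := by
      refine Real.sqrt_le_iff.2 ⟨(Real.exp_pos _).le, ?_⟩
      have : Real.exp d ≤ Real.exp (2 / r) ^ 2 := by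
        rw [← Real.exp_nat_mul]
        refine Real.exp_le_exp.2 (hdr.trans ?_)
        rw [← mul_div_assoc]
        push_cast
        gcongr
        linarith
      linarith
    calc e * √(Real.exp d - 1) ≤ e * Real.exp (2 / r) := by gcongr
      _ = 1 := by rw [he, ← Real.exp_add, neg_div, neg_add_cancel, Real.exp_zero]
  have hquot : ℓ / 2 * e ≤ √(1 - Real.exp (-(Real.pi / r * ℓ))) / √(Real.exp d - 1) := by
    rw [le_div_iff₀ hτpos, mul_assoc]
    nlinarith
  have harctan := (pi_div_four_mul_le_arctan (y := ℓ / 2 * e) (by positivity)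
    (by nlinarith)).trans (Real.arctan_mono hquot)
  rw [le_div_iff₀ Real.pi_pos]
  linarith

theorem slitStrip_subset {r κ c : ℝ} {K : Set ℝ} (hκ : |κ| = Real.pi / r) (hr : 0 < r)
    (hK : ∀ x ∈ K, κ * (x - c) ≤ 0) :
    slitStrip κ c ⊆ {z : ℂ | |z.im| < r} \ (Complex.ofReal '' K) := by
  refine fun z hz => ⟨?_, ?_⟩
  · have h := hz.1
    rw [abs_mul, hκ, div_mul_eq_mul_div, div_lt_iff₀ hr] at h
    exact lt_of_mul_lt_mul_left h Real.pi_pos.le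
  · rintro ⟨x, hx, rfl⟩
    exact (hK x hx).not_gt (ofReal_mem_slitStrip_iff.1 hz)

/-- Harmonic measure lower bound on the slit: for the slit strip
S = {|Im z| < r} \ I₀ and a real point t with d(t,I₀) ≤ 1, the harmonic measure of each
side I_± of the slit is at least (|I₀|/8)·exp(−2/r). The harmonic measure of the side
indicated by the sign σ = ±1 is realized as the value u(t) of the bounded harmonic
function with boundary value 1 on that side of the slit and 0 elsewhere. -/
theorem stmt_12 (r a b : ℝ) (hr : r ∈ Set.Ioo (0 : ℝ) 1)
    (hab : 0 < b - a) (hab1 : b - a ≤ 1)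
    (S : Set ℂ) (hS : S = {z : ℂ | |z.im| < r} \ (Complex.ofReal '' Set.Icc a b))
    (t : ℝ) (ht : (t : ℂ) ∈ S) (htd : Metric.infDist t (Set.Icc a b) ≤ 1)
    (σ : ℝ) (hσ : σ = 1 ∨ σ = -1)
    (u : ℂ → ℝ) (hu : HarmonicOnSet u S)
    (hbd : ∀ z ∈ S, u z ∈ Set.Icc (0 : ℝ) 1)
    (hside : ∀ x ∈ Set.Ioo a b,
      Filter.Tendsto u (nhdsWithin (x : ℂ) {z : ℂ | 0 < σ * z.im}) (nhds 1))
    (hother : ∀ x ∈ Set.Ioo a b,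
      Filter.Tendsto u (nhdsWithin (x : ℂ) {z : ℂ | σ * z.im < 0}) (nhds 0))
    (hlines : ∀ x : ℝ, ∀ s : ℝ, (s = r ∨ s = -r) →
      Filter.Tendsto u (nhdsWithin ((x : ℂ) + (s : ℂ) * Complex.I) S) (nhds 0)) :
    (b - a) / 8 * Real.exp (-2 / r) ≤ u (t : ℂ) := by
  subst hS
  obtain ⟨hr0, hr1⟩ := hr
  have hπr : 0 < Real.pi / r := div_pos Real.pi_pos hr0
  have hσ0 : σ ≠ 0 := by rcases hσ with rfl | rfl <;> norm_num
  have htI : t ∉ Icc a b := fun h => ht.2 ⟨t, h, rfl⟩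
  obtain ⟨y, hy, hyd⟩ := isCompact_Icc.exists_infDist_eq_dist
    (nonempty_Icc.2 (by linarith : a ≤ b)) t
  rw [hyd, Real.dist_eq, abs_le] at htd
  have key : ∀ κ c : ℝ, |κ| = Real.pi / r → (∀ x ∈ Icc a b, κ * (x - c) ≤ 0) →
      0 < κ * (t - c) → κ * (t - c) ≤ Real.pi / r →
      (∀ x, κ * (x - c) ∈ Ioo (-(Real.pi / r * (b - a))) 0 → x ∈ Ioo a b) →
      (b - a) / 8 * Real.exp (-2 / r) ≤ u (t : ℂ) := by
    intro κ c hκ hK ht0 ht1 hint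
    have hsub := slitStrip_subset hκ hr0 hK
    exact (mul_exp_le_arctan_div_pi hr0 hr1 hab hab1 ht0 ht1).trans
      ((hu.mono hsub).arctan_div_pi_le (mul_pos hπr hab) (fun z hz => (hbd z (hsub hz)).1)
        (abs_pos.1 (hκ ▸ hπr)) hσ0 ht0 fun x hx => hside x (hint x hx))
  rcases lt_or_ge t a with hta | hta
  · refine key (-(Real.pi / r)) a (by rw [abs_neg, abs_of_pos hπr]) (fun x hx => ?_) ?_ ?_
      fun x hx => ?_
    · nlinarith [hx.1]
    · nlinarith
    · nlinarith [hy.1]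
    · constructor <;> nlinarith [hx.1, hx.2]
  · have htb : b < t := lt_of_not_ge fun h => htI ⟨hta, h⟩
    refine key (Real.pi / r) b (abs_of_pos hπr) (fun x hx => ?_) ?_ ?_ fun x hx => ?_
    · nlinarith [hx.2]
    · nlinarith
    · nlinarith [hy.2]
    · constructor <;> nlinarith [hx.1, hx.2]
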